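/- The algebra of Sp(2n,ℂ)-invariant polynomial functions on 𝔰𝔭(2n) ⊕ ℂ^{2n} is a polynomial algebra freely generated by the 2n functions Tr(x²), Tr(x⁴), …, Tr(x^{2n}), ⟨v, x v⟩, ⟨v, x³ v⟩, …, ⟨v, x^{2n−1} v⟩. -/

import Mathlib

open Matrix

/-- The standard symplectic matrix `J` on `ℂ^{2n}`, with blocks `[[0, 1], [-1, 0]]`. -/
noncomputable def symplJ (n : ℕ) : Matrix (Fin n ⊕ Fin n) (Fin n ⊕ Fin n) ℂ :=
  Matrix.fromBlocks 0 1 (-1) 0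

/-- The symplectic form `⟨u, w⟩ = uᵀ J w`. -/
noncomputable def symplForm (n : ℕ) (u w : Fin n ⊕ Fin n → ℂ) : ℂ :=
  u ⬝ᵥ ((symplJ n) *ᵥ w)

/-- `x ∈ 𝔰𝔭(2n)`. -/
def inSp (n : ℕ) (x : Matrix (Fin n ⊕ Fin n) (Fin n ⊕ Fin n) ℂ) : Prop :=
  xᵀ * symplJ n + symplJ n * x = 0

/-- `g ∈ Sp(2n)`. -/
def inSpGroup (n : ℕ) (g : Matrix (Fin n ⊕ Fin n) (Fin n ⊕ Fin n) ℂ) : Prop :=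
  gᵀ * symplJ n * g = symplJ n

/-- A function on `𝔰𝔭(2n) ⊕ ℂ^{2n}` is polynomial if it is given by a polynomial
in the matrix entries and vector coordinates. -/
def IsPolyFn (n : ℕ)
    (F : Matrix (Fin n ⊕ Fin n) (Fin n ⊕ Fin n) ℂ × (Fin n ⊕ Fin n → ℂ) → ℂ) : Prop :=
  ∃ q : MvPolynomial (((Fin n ⊕ Fin n) × (Fin n ⊕ Fin n)) ⊕ (Fin n ⊕ Fin n)) ℂ,
    ∀ x v, F (x, v) = MvPolynomial.eval (Sum.elim (fun ij => x ij.1 ij.2) v) q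

/-- The proposed generators: `Tr(x²), …, Tr(x^{2n})` and `⟨v,xv⟩, ⟨v,x³v⟩, …, ⟨v,x^{2n−1}v⟩`. -/
noncomputable def spGen (n : ℕ) (i : Fin n ⊕ Fin n)
    (p : Matrix (Fin n ⊕ Fin n) (Fin n ⊕ Fin n) ℂ × (Fin n ⊕ Fin n → ℂ)) : ℂ :=
  Sum.elim (fun k : Fin n => (p.1 ^ (2 * ((k : ℕ) + 1))).trace)
    (fun k : Fin n => symplForm n p.2 ((p.1 ^ (2 * (k : ℕ) + 1)) *ᵥ p.2)) i


section Newton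
open Polynomial

variable {ι : Type*} [Fintype ι] [DecidableEq ι]

theorem aux_derivative_det (A : Matrix ι ι ℂ[X]) :
    derivative A.det = ∑ i, (A.updateCol i (fun k => derivative (A k i))).det := by
  simp only [Matrix.det_apply]
  rw [Finset.sum_comm]
  rw [derivative_sum]
  refine Finset.sum_congr rfl fun σ _ => ?_
  rw [← Finset.smul_sum]
  have : ∀ (s : ℤˣ) (p : ℂ[X]), derivative (s • p) = s • derivative p := by
    intro s p
    rcases Int.units_eq_one_or s with rfl | rfl <;> simp
  rw [this, derivative_prod_finset]
  congr 1
  refine Finset.sum_congr rfl fun i _ => ?_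
  rw [← Finset.prod_erase_mul _ _ (Finset.mem_univ i)]
  congr 1
  · refine Finset.prod_congr rfl fun k hk => ?_
    rw [Matrix.updateCol_ne (Finset.ne_of_mem_erase hk)]
  · simp

theorem aux_derivative_charpoly (M : Matrix ι ι ℂ) :
    derivative M.charpoly = (adjugate (charmatrix M)).trace := by
  rw [Matrix.charpoly, aux_derivative_det, Matrix.trace]
  refine Finset.sum_congr rfl fun i _ => ?_
  rw [Matrix.diag_apply, ← Matrix.transpose_apply (adjugate _), Matrix.adjugate_transpose,
    Matrix.adjugate_apply, ← Matrix.det_transpose]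
  congr 1
  ext k l
  by_cases h : k = i
  · subst h
    simp [Matrix.updateCol_apply, Matrix.updateRow_apply, Pi.single_apply, charmatrix_apply, Matrix.diagonal_apply]
    split_ifs <;> simp
  · simp [Matrix.updateCol_apply, Matrix.updateRow_apply, Pi.single_apply, charmatrix_apply, Matrix.diagonal_apply, h]

theorem aux_adj_rec (M : Matrix ι ι ℂ) (j : ℕ) :
    (adjugate (charmatrix M)).map (fun p => p.coeff j) =
     (adjugate (charmatrix M)).map (fun p => p.coeff (j+1)) * M
      + (M.charpoly.coeff (j+1)) • (1 : Matrix ι ι ℂ) := by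
  have h := Matrix.adjugate_mul (charmatrix M)
  set N := adjugate (charmatrix M)
  ext a b
  have h2 := congrArg (fun p : ℂ[X] => p.coeff (j+1)) (congrFun (congrFun h a) b)
  simp only [charmatrix, mul_sub, Matrix.sub_apply, coeff_sub] at h2
  rw [Matrix.mul_apply, Matrix.mul_apply] at h2
  simp [Matrix.scalar_apply, Matrix.diagonal_apply, Matrix.one_apply] at h2
  simp [Matrix.mul_apply, Matrix.one_apply]
  rw [Matrix.charpoly, charmatrix]
  split_ifs with hab
  · simp [hab] at h2 ⊢
    linear_combination h2
  · simp [hab] at h2 ⊢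
    linear_combination h2

theorem aux_trace_adj (M : Matrix ι ι ℂ) (j N k : ℕ) :
    ((adjugate (charmatrix M)).map (fun p => p.coeff j) * M ^ k).trace =
     ((adjugate (charmatrix M)).map (fun p => p.coeff (j+N)) * M ^ (k + N)).trace
      + ∑ i ∈ Finset.range N, M.charpoly.coeff (j+1+i) * (M ^ (k+i)).trace := by
  induction N with
  | zero => simp
  | succ N ih =>
    rw [ih, Finset.sum_range_succ, aux_adj_rec M (j+N), add_mul, Matrix.trace_add, mul_assoc,
      ← pow_succ', smul_mul_assoc, one_mul, Matrix.trace_smul, smul_eq_mul]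
    have : j + N + 1 = j + 1 + N := by ring
    rw [this]
    have : j + 1 + N = j + (N + 1) := by ring
    rw [this]
    have : k + (N + 1) = k + N + 1 := by ring
    rw [this]
    ring

/-- Newton's identities, for matrices. -/
theorem aux_newton (n : ℕ) (M : Matrix (Fin n) (Fin n) ℂ) (k : ℕ) (hk : k ≤ n) :
    (k : ℂ) * M.charpoly.coeff (n - k) =
      - ∑ i ∈ Finset.range k, M.charpoly.coeff (n - i) * (M ^ (k - i)).trace := by
  have hdeg : M.charpoly.natDegree = n := by simp
  -- it suffices to show the full sum
  suffices h : ((n - k : ℕ) : ℂ) * M.charpoly.coeff (n - k) =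
      ∑ i ∈ Finset.range (k+1), M.charpoly.coeff (n - k + i) * (M ^ i).trace by
    rw [Finset.sum_range_succ', ] at h
    rw [← Finset.sum_range_reflect]
    simp at h
    rw [Nat.cast_sub hk] at h
    have : ∑ j ∈ Finset.range k, M.charpoly.coeff (n - (k - 1 - j)) * (M ^ (k - (k - 1 - j))).trace
       = ∑ i ∈ Finset.range k, M.charpoly.coeff (n - k + (i+1)) * (M ^ (i+1)).trace := by
      refine Finset.sum_congr rfl fun j hj => ?_
      rw [Finset.mem_range] at hj
      congr 3 <;> omega
    rw [this]
    linear_combination -h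
  rcases Nat.lt_or_ge k n with hkn | hkn
  · obtain ⟨j, hj⟩ : ∃ j, n - k = j + 1 := ⟨n - k - 1, by omega⟩
    rw [hj]
    have h1 := aux_derivative_charpoly M
    have h2 := congrArg (fun p : ℂ[X] => p.coeff j) h1
    simp only [coeff_derivative, Matrix.trace, Matrix.diag_apply, finsetSum_coeff] at h2
    obtain ⟨N, hN, hN0⟩ : ∃ N, k + 1 ≤ N ∧
        (adjugate (charmatrix M)).map (fun p => p.coeff (j+N)) = 0 := by
      refine ⟨k + 1 + ∑ a, ∑ b, ((adjugate (charmatrix M)) a b).natDegree, by omega, ?_⟩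
      ext a b
      simp only [Matrix.map_apply, Matrix.zero_apply]
      apply coeff_eq_zero_of_natDegree_lt
      have h3 : ((adjugate (charmatrix M)) a b).natDegree ≤ ∑ b, ((adjugate (charmatrix M)) a b).natDegree :=
        Finset.single_le_sum (f := fun b => ((adjugate (charmatrix M)) a b).natDegree) (by simp) (Finset.mem_univ b)
      have h4 : ∑ b, ((adjugate (charmatrix M)) a b).natDegree ≤ ∑ a, ∑ b, ((adjugate (charmatrix M)) a b).natDegree :=
        Finset.single_le_sum (f := fun a => ∑ b, ((adjugate (charmatrix M)) a b).natDegree) (by simp) (Finset.mem_univ a)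
      omega
    have h3 := aux_trace_adj M j N 0
    rw [hN0] at h3
    simp only [zero_mul, Matrix.trace_zero, zero_add, pow_zero, mul_one] at h3
    have h4 : ((adjugate (charmatrix M)).map (fun p => p.coeff j)).trace =
       M.charpoly.coeff (j+1) * (j + 1) := by rw [h2]; rfl
    rw [h4] at h3
    push_cast
    rw [mul_comm, h3]
    symm
    apply Finset.sum_subset
    · intro a; simp; omega
    · intro a _ ha
      rw [coeff_eq_zero_of_natDegree_lt, zero_mul]
      simp at ha
      omega
  · have : k = n := le_antisymm hk hkn
    subst this
    simp only [Nat.sub_self, Nat.cast_zero, zero_mul, zero_add]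
    have := congrArg Matrix.trace (Matrix.aeval_self_charpoly M)
    rw [aeval_eq_sum_range, hdeg, Matrix.trace_sum] at this
    simpa using this.symm
end Newton
section NewtonPoly
open MvPolynomial

/-- The power sums `Tr(x^{2k})/2`, as abstract polynomials. -/
noncomputable def auxP (n : ℕ) (k : ℕ) : MvPolynomial (Fin n ⊕ Fin n) ℂ :=
  if h : k - 1 < n then C (1/2) * X (Sum.inl ⟨k - 1, h⟩) else 0

/-- Coefficients from power sums by Newton's recursion. -/
noncomputable def auxNw (n : ℕ) : ℕ → MvPolynomial (Fin n ⊕ Fin n) ℂ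
  | 0 => 1
  | k + 1 => C (-1 / ((k : ℂ) + 1)) * ∑ i : Fin (k + 1), auxNw n i * auxP n (k + 1 - i)

theorem auxNw_rec (n : ℕ) (y : Fin n ⊕ Fin n → ℂ) (k : ℕ) :
    (k : ℂ) * eval y (auxNw n k) =
      - ∑ i ∈ Finset.range k, eval y (auxNw n i) * eval y (auxP n (k - i)) := by
  cases k with
  | zero => simp
  | succ k =>
    rw [auxNw, ← Fin.sum_univ_eq_sum_range (fun i => eval y (auxNw n i) * eval y (auxP n (k + 1 - i)))]
    have : ((k : ℂ) + 1) ≠ 0 := by exact_mod_cast Nat.succ_ne_zero k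
    simp only [map_mul, eval_C, map_sum, Nat.cast_add, Nat.cast_one]
    field_simp

theorem auxNw_uniq (n : ℕ) (y : Fin n ⊕ Fin n → ℂ) (c t : ℕ → ℂ)
    (ht : ∀ k, 1 ≤ k → k ≤ n → t k = eval y (auxP n k)) (h0 : c 0 = 1)
    (hc : ∀ k ≤ n, (k : ℂ) * c k = - ∑ i ∈ Finset.range k, c i * t (k - i)) :
    ∀ k ≤ n, c k = eval y (auxNw n k) := by
  intro k
  induction k using Nat.strong_induction_on with
  | _ k ih =>
    intro hk
    rcases Nat.eq_zero_or_pos k with rfl | hpos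
    · simp [h0, auxNw]
    · have hk0 : (k : ℂ) ≠ 0 := by exact_mod_cast hpos.ne'
      apply mul_left_cancel₀ hk0
      rw [hc k hk, auxNw_rec]
      congr 1
      refine Finset.sum_congr rfl fun i hi => ?_
      rw [Finset.mem_range] at hi
      rw [ih i hi (by omega), ht _ (by omega) (by omega)]

theorem auxNw_inv (n : ℕ) (y : Fin n ⊕ Fin n → ℂ) (t : ℕ → ℂ)
    (hc : ∀ k ≤ n, (k : ℂ) * eval y (auxNw n k) =
      - ∑ i ∈ Finset.range k, eval y (auxNw n i) * t (k - i)) :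
    ∀ k, 1 ≤ k → k ≤ n → t k = eval y (auxP n k) := by
  intro k
  induction k using Nat.strong_induction_on with
  | _ k ih =>
    intro h1 hk
    obtain ⟨m, rfl⟩ : ∃ m, k = m + 1 := ⟨k - 1, by omega⟩
    have h2 := hc _ hk
    rw [auxNw_rec, Finset.sum_range_succ', Finset.sum_range_succ'] at h2
    have h3 : ∑ i ∈ Finset.range m, eval y (auxNw n (i+1)) * eval y (auxP n (m + 1 - (i+1)))
      = ∑ i ∈ Finset.range m, eval y (auxNw n (i+1)) * t (m + 1 - (i+1)) := by
      refine Finset.sum_congr rfl fun i hi => ?_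
      rw [Finset.mem_range] at hi
      rw [ih _ (by omega) (by omega) (by omega)]
    rw [h3] at h2
    simp [auxNw] at h2
    exact h2.symm

/-- charpoly coefficients from traces -/
theorem aux_charpoly_coeff (n : ℕ) (M : Matrix (Fin n) (Fin n) ℂ) (y : Fin n ⊕ Fin n → ℂ)
    (h : ∀ k : Fin n, y (Sum.inl k) = 2 * (M ^ ((k : ℕ) + 1)).trace) :
    ∀ k ≤ n, M.charpoly.coeff (n - k) = eval y (auxNw n k) := by
  apply auxNw_uniq n y (fun k => M.charpoly.coeff (n - k)) (fun k => (M ^ k).trace)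
  · intro k h1 h2
    have : k - 1 < n := by omega
    simp only [auxP, this, dif_pos, map_mul, eval_C, eval_X, h]
    rw [Nat.sub_add_cancel h1]
    ring
  · have h1 := M.charpoly_monic
    rw [Polynomial.Monic, Polynomial.leadingCoeff, Matrix.charpoly_natDegree_eq_dim] at h1
    simpa using h1
  · intro k hk
    exact aux_newton n M k hk

end NewtonPoly

section Companion
open Polynomial

/-- companion matrix of `X^(m+1) + ∑ a_j X^j` -/
noncomputable def auxComp (m : ℕ) (a : ℕ → ℂ) : Matrix (Fin (m+1)) (Fin (m+1)) ℂ :=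
  Matrix.of fun i j => if (j : ℕ) = m then - a i else if (i : ℕ) = j + 1 then 1 else 0

/-- standard basis vector, indexed by naturals -/
def auxE (n : ℕ) (k : ℕ) : Fin n → ℂ := fun i => if (i : ℕ) = k then 1 else 0

theorem aux_mulVec_E (n k : ℕ) (hk : k < n) {ι : Type*} (M : Matrix ι (Fin n) ℂ) (i : ι) :
    (M *ᵥ auxE n k) i = M i ⟨k, hk⟩ := by
  rw [Matrix.mulVec, dotProduct, Finset.sum_eq_single ⟨k, hk⟩]
  · simp [auxE]
  · intro b _ hb
    have : (b : ℕ) ≠ k := fun h => hb (Fin.ext h)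
    simp [auxE, this]
  · simp

theorem auxComp_pow (m : ℕ) (a : ℕ → ℂ) (k : ℕ) (hk : k < m + 1) :
    (auxComp m a ^ k) *ᵥ auxE (m+1) 0 = auxE (m+1) k := by
  induction k with
  | zero => simp
  | succ k ih =>
    rw [pow_succ', ← Matrix.mulVec_mulVec, ih (by omega)]
    ext i
    rw [aux_mulVec_E _ _ (by omega)]
    have : k ≠ m := by omega
    simp [auxComp, auxE, this]

theorem auxComp_charpoly (m : ℕ) (a : ℕ → ℂ) (j : ℕ) (hj : j < m + 1) :
    (auxComp m a).charpoly.coeff j = a j := by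
  set M := auxComp m a with hM
  have hdeg : M.charpoly.natDegree = m + 1 := by simp
  have h := Matrix.aeval_self_charpoly M
  rw [aeval_eq_sum_range, hdeg, Finset.sum_range_succ] at h
  have h1 := M.charpoly_monic
  rw [Polynomial.Monic, Polynomial.leadingCoeff, hdeg] at h1
  have h2 := congrFun (congrArg (fun A : Matrix _ _ ℂ => A *ᵥ auxE (m+1) 0) h) ⟨j, hj⟩
  simp only [Matrix.add_mulVec, Matrix.sum_mulVec, Matrix.smul_mulVec, h1, one_smul] at h2
  rw [pow_succ', ← Matrix.mulVec_mulVec, auxComp_pow m a m (by omega), Pi.add_apply,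
    aux_mulVec_E _ _ (by omega), Finset.sum_congr rfl (fun i hi => by
      rw [hM, auxComp_pow m a i (Finset.mem_range.1 hi)])] at h2
  have h3 : M ⟨j, hj⟩ ⟨m, by omega⟩ = - a j := by simp [hM, auxComp]
  rw [h3] at h2
  simp [Finset.sum_apply, auxE] at h2
  rw [if_pos (by omega)] at h2
  linear_combination h2

/-- Hankel sequence -/
noncomputable def auxH (m : ℕ) (a : ℕ → ℂ) (k : ℕ) : ℂ :=
  ((auxComp m a ^ k) *ᵥ auxE (m+1) 0) (Fin.last m)

/-- Hankel matrix -/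
noncomputable def auxB (m : ℕ) (a : ℕ → ℂ) (s : ℕ) : Matrix (Fin (m+1)) (Fin (m+1)) ℂ :=
  Matrix.of fun i j => auxH m a (i + j + s)

theorem auxB_comp (m : ℕ) (a : ℕ → ℂ) (s : ℕ) :
    auxB m a s * auxComp m a = auxB m a (s+1) := by
  have key : ∀ (s : ℕ) (i j : Fin (m+1)),
    auxB m a s i j = ((auxComp m a ^ (i + s : ℕ))) (Fin.last m) j := by
    intro s i j
    have : (i + j + s : ℕ) = (i + s) + j := by ring
    rw [auxB, Matrix.of_apply, auxH, this, pow_add, ← Matrix.mulVec_mulVec, auxComp_pow m a j j.2,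
      aux_mulVec_E _ _ j.2]
  ext i j
  rw [Matrix.mul_apply, key, ← add_assoc, pow_succ, Matrix.mul_apply]
  exact Finset.sum_congr rfl fun k _ => by rw [key]

theorem auxB_det (m : ℕ) (a : ℕ → ℂ) : (auxB m a 0).det ≠ 0 := by
  have hH : ∀ k, k < m + 1 → auxH m a k = if m = k then 1 else 0 := by
    intro k hk
    rw [auxH, auxComp_pow m a k hk, auxE]
    simp
  have h1 : ((auxB m a 0).submatrix Fin.revPerm id).det = 1 := by
    rw [Matrix.det_of_isUpperTriangular]
    · apply Finset.prod_eq_one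
      intro i _
      have : ((Fin.rev i : ℕ) + i + 0) = m := by simp [Fin.val_rev]; omega
      simp only [auxB, submatrix_apply, Fin.revPerm_apply, id, of_apply, this]
      rw [hH _ (by omega)]; simp
    · intro i j hij
      have hij' : (j : ℕ) < i := hij
      have : ((Fin.rev i : ℕ) + j + 0) < m := by simp [Fin.val_rev]; omega
      simp only [auxB, submatrix_apply, Fin.revPerm_apply, id, of_apply]
      rw [hH _ (by omega), if_neg (by omega)]
  rw [Matrix.det_permute] at h1
  intro h
  rw [h] at h1
  simp at h1

theorem aux_norm (H : ℂ[X]) : ∃ p : ℂ[X], p * p.comp (-X) = H.comp (X ^ 2) := by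
  have hs := (IsAlgClosed.splits H).eq_prod_roots
  have hmul : ∀ A B : ℂ[X], (∃ p : ℂ[X], p * p.comp (-X) = A.comp (X ^ 2)) →
      (∃ p : ℂ[X], p * p.comp (-X) = B.comp (X ^ 2)) →
      (∃ p : ℂ[X], p * p.comp (-X) = (A * B).comp (X ^ 2)) := by
    rintro A B ⟨p, hp⟩ ⟨q, hq⟩
    refine ⟨p * q, ?_⟩
    rw [mul_comp, mul_comp, ← hp, ← hq]; ring
  have hC : ∀ c : ℂ, ∃ p : ℂ[X], p * p.comp (-X) = (C c).comp (X ^ 2) := by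
    intro c
    obtain ⟨d, hd⟩ := IsAlgClosed.exists_pow_nat_eq c (n := 2) (by norm_num)
    refine ⟨C d, ?_⟩
    rw [C_comp, C_comp, ← hd, C_pow]; ring
  have hX : ∀ c : ℂ, ∃ p : ℂ[X], p * p.comp (-X) = (X - C c).comp (X ^ 2) := by
    intro c
    obtain ⟨d, hd⟩ := IsAlgClosed.exists_pow_nat_eq c (n := 2) (by norm_num)
    refine ⟨C Complex.I * (X - C d), ?_⟩
    have : (C Complex.I : ℂ[X]) * C Complex.I = -1 := by rw [← C_mul]; simp
    simp only [mul_comp, sub_comp, X_comp, C_comp, ← hd]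
    rw [C_pow]
    linear_combination (X - C d) * (-X - C d) * this
  rw [hs]
  apply hmul _ _ (hC _)
  generalize H.roots = s
  induction s using Multiset.induction_on with
  | empty => simpa using hC 1
  | cons a s ih =>
    rw [Multiset.map_cons, Multiset.prod_cons]
    exact hmul _ _ (hX a) ih
end Companion

section Sympl

/-- `⟨v, x^(2m+1) v⟩` -/
noncomputable def auxb (n m : ℕ) (x : Matrix (Fin n ⊕ Fin n) (Fin n ⊕ Fin n) ℂ)
    (v : Fin n ⊕ Fin n → ℂ) : ℂ := symplForm n v ((x ^ (2 * m + 1)) *ᵥ v)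

theorem aux_J_sq (n : ℕ) : symplJ n * symplJ n = -1 := by
  rw [symplJ, Matrix.fromBlocks_multiply]
  simp [← Matrix.fromBlocks_one, Matrix.fromBlocks_neg]

theorem aux_J_tr (n : ℕ) : (symplJ n)ᵀ = - symplJ n := by
  rw [symplJ, Matrix.fromBlocks_transpose]
  simp [Matrix.fromBlocks_neg]

theorem aux_form_mul (n : ℕ) (A : Matrix (Fin n ⊕ Fin n) (Fin n ⊕ Fin n) ℂ)
    (u w : Fin n ⊕ Fin n → ℂ) :
    symplForm n (A *ᵥ u) w = u ⬝ᵥ ((Aᵀ * symplJ n) *ᵥ w) := by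
  rw [symplForm, ← Matrix.mulVec_mulVec, dotProduct_comm, Matrix.dotProduct_transpose_mulVec]

theorem aux_form_skew (n : ℕ) (u w : Fin n ⊕ Fin n → ℂ) :
    symplForm n u w = - symplForm n w u := by
  rw [symplForm, symplForm, ← Matrix.dotProduct_transpose_mulVec, aux_J_tr, Matrix.neg_mulVec,
    dotProduct_neg]

theorem aux_tr_pow (n : ℕ) (x : Matrix (Fin n ⊕ Fin n) (Fin n ⊕ Fin n) ℂ) (hx : inSp n x) (k : ℕ) :
    (x ^ k)ᵀ * symplJ n = symplJ n * (-x) ^ k := by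
  have h : xᵀ * symplJ n = symplJ n * (-x) := by
    rw [mul_neg]; exact eq_neg_of_add_eq_zero_left hx
  induction k with
  | zero => simp
  | succ k ih =>
    rw [pow_succ, Matrix.transpose_mul, mul_assoc, ih, ← mul_assoc, h, mul_assoc, ← pow_succ']

theorem aux_form_pow (n : ℕ) (x : Matrix (Fin n ⊕ Fin n) (Fin n ⊕ Fin n) ℂ) (hx : inSp n x)
    (a b : ℕ) (v : Fin n ⊕ Fin n → ℂ) :
    symplForm n ((x ^ a) *ᵥ v) ((x ^ b) *ᵥ v) = (-1) ^ a * symplForm n v ((x ^ (a + b)) *ᵥ v) := by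
  rw [aux_form_mul, aux_tr_pow n x hx, Matrix.mulVec_mulVec, mul_assoc, neg_pow, mul_assoc, ← pow_add,
    symplForm, Matrix.mulVec_mulVec]
  rcases neg_one_pow_eq_or (Matrix (Fin n ⊕ Fin n) (Fin n ⊕ Fin n) ℂ) a with h | h
  · rcases Nat.even_or_odd a with h' | h'
    · simp [h'.neg_one_pow]
    · simp [h'.neg_one_pow, Matrix.neg_mulVec]
  · rcases Nat.even_or_odd a with h' | h'
    · simp [h'.neg_one_pow]
    · simp [h'.neg_one_pow, Matrix.neg_mulVec]

theorem aux_form_even (n : ℕ) (x : Matrix (Fin n ⊕ Fin n) (Fin n ⊕ Fin n) ℂ) (hx : inSp n x)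
    (k : ℕ) (hk : Even k) (v : Fin n ⊕ Fin n → ℂ) :
    symplForm n v ((x ^ k) *ᵥ v) = 0 := by
  have h1 := aux_form_pow n x hx k 0 v
  rw [aux_form_skew, hk.neg_one_pow] at h1
  simp at h1
  exact self_eq_neg.mp h1.symm

theorem aux_conj_pow (n : ℕ) (g x : Matrix (Fin n ⊕ Fin n) (Fin n ⊕ Fin n) ℂ) (hg : IsUnit g)
    (k : ℕ) : (g * x * g⁻¹) ^ k = g * x ^ k * g⁻¹ := by
  have hd : IsUnit g.det := (Matrix.isUnit_iff_isUnit_det g).1 hg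
  induction k with
  | zero => simp [Matrix.mul_nonsing_inv g hd]
  | succ k ih =>
    rw [pow_succ, ih, pow_succ]
    simp only [mul_assoc]
    rw [Matrix.nonsing_inv_mul_cancel_left _ _ hd]

theorem aux_trace_inv (n : ℕ) (g x : Matrix (Fin n ⊕ Fin n) (Fin n ⊕ Fin n) ℂ) (hg : IsUnit g)
    (k : ℕ) : ((g * x * g⁻¹) ^ k).trace = (x ^ k).trace := by
  have hd : IsUnit g.det := (Matrix.isUnit_iff_isUnit_det g).1 hg
  rw [aux_conj_pow n g x hg, Matrix.trace_mul_comm, ← mul_assoc, Matrix.nonsing_inv_mul _ hd, one_mul]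

theorem auxb_inv (n m : ℕ) (g x : Matrix (Fin n ⊕ Fin n) (Fin n ⊕ Fin n) ℂ)
    (hs : inSpGroup n g) (hg : IsUnit g) (v : Fin n ⊕ Fin n → ℂ) :
    auxb n m (g * x * g⁻¹) (g *ᵥ v) = auxb n m x v := by
  have hd : IsUnit g.det := (Matrix.isUnit_iff_isUnit_det g).1 hg
  rw [auxb, auxb, aux_conj_pow n g x hg, aux_form_mul, symplForm]
  simp only [Matrix.mulVec_mulVec]
  congr 2
  have : gᵀ * symplJ n * (g * x ^ (2 * m + 1) * g⁻¹ * g) = (gᵀ * symplJ n * g) * (x ^ (2 * m + 1) * (g⁻¹ * g)) := by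
    simp only [mul_assoc]
  rw [this, hs, Matrix.nonsing_inv_mul _ hd, mul_one]

theorem auxGen_inv (n : ℕ) (i : Fin n ⊕ Fin n) (g x : Matrix (Fin n ⊕ Fin n) (Fin n ⊕ Fin n) ℂ)
    (hs : inSpGroup n g) (hg : IsUnit g) (v : Fin n ⊕ Fin n → ℂ) :
    spGen n i (g * x * g⁻¹, g *ᵥ v) = spGen n i (x, v) := by
  rcases i with k | k
  · exact aux_trace_inv n g x hg _
  · exact auxb_inv n k g x hs hg v

theorem auxY_inSp (n : ℕ) (Q B : Matrix (Fin n) (Fin n) ℂ) (hQ : Qᵀ = Q) (hB : Bᵀ = B) :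
    inSp n (Matrix.fromBlocks 0 Q B 0) := by
  rw [inSp, symplJ, Matrix.fromBlocks_transpose, Matrix.fromBlocks_multiply,
    Matrix.fromBlocks_multiply, Matrix.fromBlocks_add]
  simp [hQ, hB]

theorem auxY_pow (n : ℕ) (Q B : Matrix (Fin n) (Fin n) ℂ) (k : ℕ) :
    (Matrix.fromBlocks 0 Q B 0) ^ (2 * k) = Matrix.fromBlocks ((Q * B) ^ k) 0 0 ((B * Q) ^ k) := by
  rw [pow_mul]
  induction k with
  | zero => simp
  | succ k ih =>
    rw [pow_succ, ih, pow_two, Matrix.fromBlocks_multiply, Matrix.fromBlocks_multiply]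
    simp [pow_succ]

theorem auxY_trace (n : ℕ) (Q B : Matrix (Fin n) (Fin n) ℂ) (k : ℕ) :
    ((Matrix.fromBlocks 0 Q B 0) ^ (2 * k)).trace = 2 * ((Q * B) ^ k).trace := by
  have htr : ∀ A D : Matrix (Fin n) (Fin n) ℂ,
      (Matrix.fromBlocks A 0 0 D).trace = A.trace + D.trace := by
    intro A D; simp [Matrix.trace]
  rw [auxY_pow, htr, two_mul]
  congr 1
  cases k with
  | zero => simp
  | succ k =>
    rw [pow_succ, ← mul_assoc, Matrix.trace_mul_comm, ← mul_assoc]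
    have : ∀ k, Q * (B * Q) ^ k = (Q * B) ^ k * Q := by
      intro k
      induction k with
      | zero => simp
      | succ k ih => rw [pow_succ, ← mul_assoc, ih, pow_succ]; simp only [mul_assoc]
    rw [this, mul_assoc, ← pow_succ]

theorem auxY_b (n : ℕ) (Q B : Matrix (Fin n) (Fin n) ℂ) (m : ℕ) (w : Fin n → ℂ) :
    auxb n m (Matrix.fromBlocks 0 Q B 0) (Sum.elim w 0) = w ⬝ᵥ ((B * (Q * B) ^ m) *ᵥ w) := by
  rw [auxb, symplForm, pow_succ', auxY_pow, Matrix.fromBlocks_multiply, symplJ,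
    Matrix.mulVec_mulVec, Matrix.fromBlocks_multiply, Matrix.fromBlocks_mulVec]
  simp [dotProduct, Fintype.sum_sum_type]

theorem aux_conj (n : ℕ) (hn : 0 < n) (x : Matrix (Fin n ⊕ Fin n) (Fin n ⊕ Fin n) ℂ)
    (hx : inSp n x) (v : Fin n ⊕ Fin n → ℂ) (B B' : Matrix (Fin n) (Fin n) ℂ)
    (hB : ∀ i j, B i j = auxb n (i + j) x v) (hB' : ∀ i j, B' i j = auxb n (i + j + 1) x v)
    (hdet : B.det ≠ 0) :
    ∃ g, inSpGroup n g ∧ IsUnit g ∧ x = g * Matrix.fromBlocks 0 (B⁻¹ * B' * B⁻¹) B 0 * g⁻¹ ∧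
      v = g *ᵥ (Sum.elim (auxE n 0) 0) := by
  have hBs : Bᵀ = B := by ext i j; rw [Matrix.transpose_apply, hB, hB, add_comm]
  have hdu : IsUnit B.det := hdet.isUnit
  have hBi : (B⁻¹)ᵀ = B⁻¹ := by rw [Matrix.transpose_nonsing_inv, hBs]
  set κ : Fin n ⊕ Fin n → ℕ := Sum.elim (fun i => 2 * (i : ℕ)) (fun i => 2 * (i : ℕ) + 1) with hκ
  set K : Matrix (Fin n ⊕ Fin n) (Fin n ⊕ Fin n) ℂ := Matrix.of fun r c => ((x ^ κ c) *ᵥ v) r with hK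
  have hcol : ∀ (A : Matrix (Fin n ⊕ Fin n) (Fin n ⊕ Fin n) ℂ) c d,
      (Kᵀ * A * K) c d = ((x ^ κ c) *ᵥ v) ⬝ᵥ (A *ᵥ ((x ^ κ d) *ᵥ v)) := by
    intro A c d
    rw [mul_assoc, Matrix.mul_apply]
    rfl
  have h1 : Kᵀ * symplJ n * K = Matrix.fromBlocks 0 B (-B) 0 := by
    ext c d
    rw [hcol]
    change symplForm n _ _ = _
    rw [aux_form_pow n x hx]
    rcases c with i | i <;> rcases d with j | j
    · rw [aux_form_even n x hx _ (by simp [hκ, parity_simps])]; simp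
    · have : κ (Sum.inl i) + κ (Sum.inr j) = 2 * (i + j : ℕ) + 1 := by simp [hκ]; ring
      rw [this]; simp [hκ, hB, auxb]
    · have : κ (Sum.inr i) + κ (Sum.inl j) = 2 * (i + j : ℕ) + 1 := by simp [hκ]; ring
      rw [this]; simp [hκ, hB, auxb, pow_succ]
    · rw [aux_form_even n x hx _ (by simp [hκ, parity_simps])]; simp
  have h2 : Kᵀ * (symplJ n * x) * K = Matrix.fromBlocks B 0 0 (-B') := by
    ext c d
    rw [hcol, ← Matrix.mulVec_mulVec, Matrix.mulVec_mulVec v, ← pow_succ']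
    change symplForm n _ _ = _
    rw [aux_form_pow n x hx]
    rcases c with i | i <;> rcases d with j | j
    · have : κ (Sum.inl i) + (κ (Sum.inl j) + 1) = 2 * (i + j : ℕ) + 1 := by simp [hκ]; ring
      rw [this]; simp [hκ, hB, auxb]
    · rw [aux_form_even n x hx _ (by simp [hκ, parity_simps])]; simp
    · rw [aux_form_even n x hx _ (by simp [hκ, parity_simps])]; simp
    · have : κ (Sum.inr i) + (κ (Sum.inr j) + 1) = 2 * (i + j + 1 : ℕ) + 1 := by simp [hκ]; ring
      rw [this]; simp [hκ, hB', auxb, pow_succ]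
  set T : Matrix (Fin n ⊕ Fin n) (Fin n ⊕ Fin n) ℂ := Matrix.fromBlocks 1 0 0 B⁻¹ with hT
  have hTt : Tᵀ = T := by rw [hT, Matrix.fromBlocks_transpose, hBi]; simp
  set g := K * T with hg
  have hgt : ∀ A, gᵀ * A * g = T * (Kᵀ * A * K) * T := by
    intro A
    rw [hg, Matrix.transpose_mul, hTt]; simp only [mul_assoc]
  have hs : inSpGroup n g := by
    rw [inSpGroup, hgt, h1, hT, Matrix.fromBlocks_multiply, Matrix.fromBlocks_multiply, symplJ]
    simp [Matrix.mul_nonsing_inv _ hdu, Matrix.nonsing_inv_mul _ hdu]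
  have hinv : (-(symplJ n * gᵀ * symplJ n)) * g = 1 := by
    have : (-(symplJ n * gᵀ * symplJ n)) * g = - (symplJ n * (gᵀ * symplJ n * g)) := by
      simp only [mul_assoc, neg_mul]
    rw [this, hs, aux_J_sq, neg_neg]
  have hgi : g⁻¹ = -(symplJ n * gᵀ * symplJ n) := Matrix.inv_eq_left_inv hinv
  have hgd : IsUnit g.det := Matrix.isUnit_det_of_left_inverse hinv
  have hgu : IsUnit g := (Matrix.isUnit_iff_isUnit_det g).2 hgd
  have hy : g⁻¹ * x * g = Matrix.fromBlocks 0 (B⁻¹ * B' * B⁻¹) B 0 := by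
    have : g⁻¹ * x * g = - (symplJ n * (gᵀ * (symplJ n * x) * g)) := by
      rw [hgi]; simp only [mul_assoc, neg_mul]
    rw [this, hgt, h2, hT, symplJ, Matrix.fromBlocks_multiply, Matrix.fromBlocks_multiply,
      Matrix.fromBlocks_multiply, Matrix.fromBlocks_neg]
    simp
  refine ⟨g, hs, hgu, ?_, ?_⟩
  · rw [← hy, Matrix.mul_assoc g⁻¹, Matrix.mul_nonsing_inv_cancel_left _ _ hgd,
      Matrix.mul_nonsing_inv_cancel_right _ _ hgd]
  · have e1 : T *ᵥ (Sum.elim (auxE n 0) 0) = Sum.elim (auxE n 0) 0 := by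
      rw [hT, Matrix.fromBlocks_mulVec]
      simp
    rw [hg, ← Matrix.mulVec_mulVec, e1]
    ext r
    have : (Sum.elim (auxE n 0) 0 : Fin n ⊕ Fin n → ℂ) = Pi.single (Sum.inl ⟨0, hn⟩) 1 := by
      ext c
      rcases c with i | i
      · simp [auxE, Pi.single_apply, Fin.ext_iff]
      · simp
    simp [this, hK, hκ]
end Sympl

section Surj
open MvPolynomial

/-- The functions `⟨v, x^(2m+1) v⟩` for all `m`, as polynomials in the generators. -/
noncomputable def auxBP (n : ℕ) (m : ℕ) : MvPolynomial (Fin n ⊕ Fin n) ℂ :=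
  if h : m < n then X (Sum.inr ⟨m, h⟩)
  else - ∑ j : Fin n, auxNw n (n - j) * auxBP n (m - n + j)
termination_by m
decreasing_by omega

theorem auxBP_eval (n : ℕ) (hn : 0 < n) (x : Matrix (Fin n ⊕ Fin n) (Fin n ⊕ Fin n) ℂ)
    (hx : inSp n x) (v : Fin n ⊕ Fin n → ℂ)
    (hdet : (Matrix.of fun i j : Fin n => auxb n (i + j) x v).det ≠ 0) (m : ℕ) :
    eval (fun i => spGen n i (x, v)) (auxBP n m) = auxb n m x v := by
  set B := Matrix.of fun i j : Fin n => auxb n (i + j) x v with hB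
  set B' := Matrix.of fun i j : Fin n => auxb n (i + j + 1) x v with hB'
  obtain ⟨g, hs, hg, hxg, hvg⟩ := aux_conj n hn x hx v B B' (fun i j => rfl) (fun i j => rfl) hdet
  set Q := B⁻¹ * B' * B⁻¹ with hQ
  set y := fun i => spGen n i (x, v) with hy
  have hc := aux_charpoly_coeff n (Q * B) y (by
    intro k
    rw [← auxY_trace, ← aux_trace_inv n g _ hg, ← hxg]
    rfl)
  have hb : ∀ m, auxb n m x v = auxE n 0 ⬝ᵥ ((B * (Q * B) ^ m) *ᵥ auxE n 0) := by
    intro m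
    rw [← auxY_b, ← auxb_inv n m g (Matrix.fromBlocks 0 Q B 0) hs hg, ← hxg, ← hvg]
  induction m using Nat.strong_induction_on with
  | _ m ih =>
    rw [auxBP]
    split_ifs with h
    · rw [eval_X]; rfl
    · have hCH := Matrix.aeval_self_charpoly (Q * B)
      rw [Polynomial.aeval_eq_sum_range, Matrix.charpoly_natDegree_eq_dim, Fintype.card_fin,
        Finset.sum_range_succ] at hCH
      have h1 := hc 0 (by omega)
      rw [Nat.sub_zero, auxNw, map_one] at h1
      rw [h1, one_smul] at hCH
      have h2 : auxb n m x v =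
          - ∑ j ∈ Finset.range n, (Q * B).charpoly.coeff j * auxb n (m - n + j) x v := by
        have h3 : (Q * B) ^ m = - ∑ j ∈ Finset.range n,
            (Q * B).charpoly.coeff j • (Q * B) ^ (m - n + j) := by
          have h4 : (Q * B) ^ m = (Q * B) ^ (m - n) * (Q * B) ^ n := by
            rw [← pow_add]; congr 1; omega
          rw [h4, eq_neg_of_add_eq_zero_right hCH, mul_neg, Finset.mul_sum]
          congr 1
          refine Finset.sum_congr rfl fun j _ => ?_
          rw [mul_smul_comm, pow_add]
        rw [hb, h3, mul_neg, Finset.mul_sum, Matrix.neg_mulVec, Matrix.sum_mulVec, dotProduct_neg,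
          dotProduct_sum]
        congr 1
        refine Finset.sum_congr rfl fun j _ => ?_
        rw [hb, mul_smul_comm, Matrix.smul_mulVec, dotProduct_smul, smul_eq_mul]
      rw [h2, map_neg, map_sum, ← Fin.sum_univ_eq_sum_range
        (fun j => (Q * B).charpoly.coeff j * auxb n (m - n + j) x v)]
      congr 1
      refine Finset.sum_congr rfl fun j _ => ?_
      rw [map_mul, ih _ (by omega), ← hc _ (by omega)]
      congr 2
      omega

theorem aux_base (m : ℕ) (y : Fin (m+1) ⊕ Fin (m+1) → ℂ) :
    ∃ x, inSp (m+1) x ∧ (∀ k : Fin (m+1), (x ^ (2 * ((k : ℕ) + 1))).trace = y (Sum.inl k)) ∧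
      ∃ v, (Matrix.of fun i j : Fin (m+1) => auxb (m+1) (i + j) x v).det ≠ 0 := by
  set a : ℕ → ℂ := fun j => eval y (auxNw (m+1) (m + 1 - j)) with ha
  set M := auxComp m a with hM
  set B := auxB m a 0 with hB
  have hsym : ∀ s, (auxB m a s)ᵀ = auxB m a s := by
    intro s
    ext i j
    simp only [auxB, Matrix.transpose_apply, Matrix.of_apply]
    congr 1; ring
  have hdet : B.det ≠ 0 := auxB_det m a
  have hdu : IsUnit B.det := hdet.isUnit
  have hBi : (B⁻¹)ᵀ = B⁻¹ := by rw [Matrix.transpose_nonsing_inv, hsym]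
  set Q := B⁻¹ * auxB m a 1 * B⁻¹ with hQ
  have hQs : Qᵀ = Q := by
    rw [hQ, Matrix.transpose_mul, Matrix.transpose_mul, hBi, hsym, mul_assoc]
  have hQB : Q * B = M := by
    have h1 : auxB m a 1 = B * M := (auxB_comp m a 0).symm
    rw [hQ, h1, Matrix.nonsing_inv_mul_cancel_right _ _ hdu, 
      Matrix.nonsing_inv_mul_cancel_left _ _ hdu]
  have hpow : ∀ s, B * M ^ s = auxB m a s := by
    intro s
    induction s with
    | zero => simp [hB]
    | succ s ih => rw [pow_succ, ← mul_assoc, ih, auxB_comp]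
  refine ⟨Matrix.fromBlocks 0 Q B 0, auxY_inSp _ _ _ hQs (hsym 0), ?_, Sum.elim (auxE (m+1) 0) 0, ?_⟩
  · intro k
    rw [auxY_trace, hQB]
    have hco : ∀ k ≤ m + 1, M.charpoly.coeff (m + 1 - k) = eval y (auxNw (m+1) k) := by
      intro k hk
      rcases Nat.eq_zero_or_pos k with rfl | hpos
      · have h1 := M.charpoly_monic
        rw [Polynomial.Monic, Polynomial.leadingCoeff, Matrix.charpoly_natDegree_eq_dim] at h1
        simpa [auxNw] using h1
      · rw [hM, auxComp_charpoly m a _ (by omega), ha]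
        simp only
        congr 2; omega
    have := auxNw_inv (m+1) y (fun k => (M ^ k).trace) (by
      intro k hk
      rw [← hco k hk, aux_newton _ _ k hk]
      congr 1
      refine Finset.sum_congr rfl fun i hi => ?_
      rw [Finset.mem_range] at hi
      rw [hco i (by omega)]) (k + 1) (by omega) (by omega)
    have hk : (k : ℕ) + 1 - 1 < m + 1 := by omega
    rw [this, auxP, dif_pos hk, map_mul, eval_C, eval_X, ← mul_assoc]
    norm_num
  · convert hdet using 2
    ext i j
    rw [Matrix.of_apply, auxY_b, hQB, hpow, dotProduct_comm, dotProduct]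
    rw [Finset.sum_eq_single 0]
    · rw [aux_mulVec_E _ _ (by omega)]
      simp [auxE, auxB, hB]
    · intro b _ hb
      have : (b : ℕ) ≠ 0 := fun h => hb (Fin.ext h)
      simp [auxE, this]
    · simp

theorem aux_form_poly (n : ℕ) (x : Matrix (Fin n ⊕ Fin n) (Fin n ⊕ Fin n) ℂ)
    (hx : inSp n x) (p : Polynomial ℂ) :
    (Polynomial.aeval x p)ᵀ * symplJ n = symplJ n * Polynomial.aeval x (p.comp (-Polynomial.X)) := by
  rw [Polynomial.aeval_comp, map_neg, Polynomial.aeval_X]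
  induction p using Polynomial.induction_on' with
  | add p q hp hq => rw [map_add, map_add, Matrix.transpose_add, add_mul, hp, hq, mul_add]
  | monomial k c =>
    rw [Polynomial.aeval_monomial, Polynomial.aeval_monomial, ← Algebra.smul_def, ← Algebra.smul_def,
      Matrix.transpose_smul, smul_mul_assoc, aux_tr_pow n x hx, mul_smul_comm]

theorem auxb_norm (n : ℕ) (x : Matrix (Fin n ⊕ Fin n) (Fin n ⊕ Fin n) ℂ)
    (hx : inSp n x) (v : Fin n ⊕ Fin n → ℂ) (p H : Polynomial ℂ)
    (hp : p * p.comp (-Polynomial.X) = H.comp (Polynomial.X ^ 2)) (N : ℕ) (hN : H.natDegree < N) (k : ℕ) :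
    auxb n k x ((Polynomial.aeval x p) *ᵥ v) =
      ∑ j ∈ Finset.range N, H.coeff j * auxb n (j + k) x v := by
  rw [auxb, aux_form_mul, aux_form_poly n x hx, Matrix.mulVec_mulVec, Matrix.mulVec_mulVec]
  have h1 : symplJ n * Polynomial.aeval x (p.comp (-Polynomial.X)) * x ^ (2 * k + 1) * Polynomial.aeval x p
     = symplJ n * ∑ j ∈ Finset.range N, H.coeff j • x ^ (2 * (j + k) + 1) := by
    have h2 : x ^ (2 * k + 1) = Polynomial.aeval x (Polynomial.X ^ (2 * k + 1) : Polynomial ℂ) := by simp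
    rw [mul_assoc, mul_assoc]
    congr 1
    rw [h2, ← map_mul, ← map_mul]
    have h3 : p.comp (-Polynomial.X) * (Polynomial.X ^ (2 * k + 1) * p) =
       Polynomial.X ^ (2 * k + 1) * H.comp (Polynomial.X ^ 2) := by
      rw [← hp]; ring
    rw [h3, map_mul, Polynomial.aeval_comp, Polynomial.aeval_eq_sum_range' hN, ← h2, Finset.mul_sum]
    refine Finset.sum_congr rfl fun j _ => ?_
    rw [mul_smul_comm, map_pow, Polynomial.aeval_X, ← pow_mul, ← pow_add]
    congr 2; ring
  rw [h1, Finset.mul_sum, Matrix.sum_mulVec, dotProduct_sum]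
  refine Finset.sum_congr rfl fun j _ => ?_
  rw [mul_smul_comm, Matrix.smul_mulVec, dotProduct_smul, smul_eq_mul, auxb, symplForm,
    Matrix.mulVec_mulVec]

theorem aux_surj (m : ℕ) (y : Fin (m+1) ⊕ Fin (m+1) → ℂ) :
    ∃ x, inSp (m+1) x ∧ ∃ v, (fun i => spGen (m+1) i (x, v)) = y := by
  obtain ⟨x, hx, htr, v, hdet⟩ := aux_base m y
  set B := Matrix.of fun i j : Fin (m+1) => auxb (m+1) (i + j) x v with hB
  set u := B⁻¹ *ᵥ (fun k => y (Sum.inr k)) with hu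
  have hBu : B *ᵥ u = fun k => y (Sum.inr k) := by
    rw [hu, Matrix.mulVec_mulVec, Matrix.mul_nonsing_inv _ hdet.isUnit, Matrix.one_mulVec]
  set H : Polynomial ℂ := ∑ j : Fin (m+1), Polynomial.monomial (j : ℕ) (u j) with hH
  have hdeg : H.natDegree < m + 1 := by
    rw [Nat.lt_succ_iff]
    apply Polynomial.natDegree_sum_le_of_forall_le
    intro j _
    exact (Polynomial.natDegree_monomial_le _).trans (by omega)
  have hco : ∀ j : Fin (m+1), H.coeff j = u j := by
    intro j
    rw [hH, Polynomial.finsetSum_coeff]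
    simp [Polynomial.coeff_monomial, Fin.val_inj]
  obtain ⟨p, hp⟩ := aux_norm H
  refine ⟨x, hx, (Polynomial.aeval x p) *ᵥ v, ?_⟩
  ext i
  rcases i with k | k
  · exact htr k
  · change auxb (m+1) k x _ = _
    rw [auxb_norm _ x hx v p H hp (m+1) hdeg, ← Fin.sum_univ_eq_sum_range
        (fun j => H.coeff j * auxb (m+1) (j + k) x v), ← congrFun hBu k, Matrix.mulVec, dotProduct]
    refine Finset.sum_congr rfl fun j _ => ?_
    rw [hco, hB, Matrix.of_apply, mul_comm, add_comm (j : ℕ) (k : ℕ)]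
end Surj

section Final
open MvPolynomial

/-- The domain of the polynomial functions. -/
abbrev AuxDom (n : ℕ) : Type :=
  Matrix (Fin n ⊕ Fin n) (Fin n ⊕ Fin n) ℂ × (Fin n ⊕ Fin n → ℂ)

/-- Coordinates of a point. -/
def auxCoord (n : ℕ) (p : AuxDom n) : ((Fin n ⊕ Fin n) × (Fin n ⊕ Fin n)) ⊕ (Fin n ⊕ Fin n) → ℂ :=
  Sum.elim (fun ij => p.1 ij.1 ij.2) p.2

/-- The algebra of polynomial functions. -/
noncomputable def auxA (n : ℕ) : Subalgebra ℂ (AuxDom n → ℂ) :=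
  (aeval (R := ℂ) (fun i (p : AuxDom n) => auxCoord n p i)).range

theorem aux_aeval_fun (n : ℕ) (q : MvPolynomial (((Fin n ⊕ Fin n) × (Fin n ⊕ Fin n)) ⊕ (Fin n ⊕ Fin n)) ℂ)
    (p : AuxDom n) :
    (aeval (R := ℂ) (fun i (p : AuxDom n) => auxCoord n p i) q) p = eval (auxCoord n p) q := by
  induction q using MvPolynomial.induction_on with
  | C a => simp
  | add p q hp hq => simp [hp, hq]
  | mul_X p i hp => simp [hp]

theorem auxA_iff (n : ℕ) (F : AuxDom n → ℂ) : F ∈ auxA n ↔ IsPolyFn n F := by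
  rw [auxA, AlgHom.mem_range]
  constructor
  · rintro ⟨q, rfl⟩
    exact ⟨q, fun x v => aux_aeval_fun n q (x, v)⟩
  · rintro ⟨q, hq⟩
    refine ⟨q, funext fun p => ?_⟩
    rw [aux_aeval_fun]
    exact (hq p.1 p.2).symm

theorem auxA_entry (n : ℕ) (i j : Fin n ⊕ Fin n) : (fun p : AuxDom n => p.1 i j) ∈ auxA n :=
  ⟨X (Sum.inl (i, j)), by ext p; simp [auxCoord]⟩

theorem auxA_vec (n : ℕ) (i : Fin n ⊕ Fin n) : (fun p : AuxDom n => p.2 i) ∈ auxA n :=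
  ⟨X (Sum.inr i), by ext p; simp [auxCoord]⟩

theorem auxA_const (n : ℕ) (c : ℂ) : (fun _ : AuxDom n => c) ∈ auxA n :=
  (auxA n).algebraMap_mem c

theorem auxA_sum (n : ℕ) {ι : Type} [Fintype ι] (f : ι → AuxDom n → ℂ) (h : ∀ i, f i ∈ auxA n) :
    (fun p => ∑ i, f i p) ∈ auxA n := by
  have : (fun p => ∑ i, f i p) = ∑ i, f i := by ext p; simp
  rw [this]
  exact (auxA n).sum_mem fun i _ => h i

theorem auxA_mul (n : ℕ) (f g : AuxDom n → ℂ) (hf : f ∈ auxA n) (hg : g ∈ auxA n) :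
    (fun p => f p * g p) ∈ auxA n := (auxA n).mul_mem hf hg

theorem auxA_pow (n : ℕ) (k : ℕ) : ∀ i j, (fun p : AuxDom n => (p.1 ^ k) i j) ∈ auxA n := by
  induction k with
  | zero => intro i j; simp only [pow_zero]; exact auxA_const n _
  | succ k ih =>
    intro i j
    simp only [pow_succ, Matrix.mul_apply]
    exact auxA_sum n _ fun l => auxA_mul n _ _ (ih i l) (auxA_entry n l j)

theorem auxA_b (n m : ℕ) : (fun p : AuxDom n => auxb n m p.1 p.2) ∈ auxA n := by
  simp only [auxb, symplForm, Matrix.mulVec, dotProduct]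
  exact auxA_sum n _ fun i => auxA_mul n _ _ (auxA_vec n i) (auxA_sum n _ fun j =>
    auxA_mul n _ _ (auxA_const n _) (auxA_sum n _ fun k =>
      auxA_mul n _ _ (auxA_pow n _ _ _) (auxA_vec n k)))

theorem auxA_gen (n : ℕ) (i : Fin n ⊕ Fin n) : (fun p : AuxDom n => spGen n i p) ∈ auxA n := by
  rcases i with k | k
  · simp only [spGen, Sum.elim_inl, Matrix.trace, Matrix.diag_apply]
    exact auxA_sum n _ fun i => auxA_pow n _ i i
  · exact auxA_b n k

theorem auxA_eval (n : ℕ) (q : MvPolynomial (Fin n ⊕ Fin n) ℂ) :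
    (fun p : AuxDom n => eval (fun i => spGen n i p) q) ∈ auxA n := by
  induction q using MvPolynomial.induction_on with
  | C a => simp only [eval_C]; exact auxA_const n a
  | add p q hp hq => simp only [map_add]; exact (auxA n).add_mem hp hq
  | mul_X p i hp => simp only [map_mul, eval_X]; exact auxA_mul n _ _ hp (auxA_gen n i)

theorem auxA_det (n : ℕ) :
    (fun p : AuxDom n => (Matrix.of fun i j : Fin n => auxb n (i + j) p.1 p.2).det) ∈ auxA n := by
  simp only [Matrix.det_apply', Matrix.of_apply]
  refine auxA_sum n _ fun σ => auxA_mul n _ _ (auxA_const n _) ?_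
  have : (fun p : AuxDom n => ∏ i : Fin n, auxb n ((σ i : Fin n) + i) p.1 p.2) =
      ∏ i : Fin n, fun p : AuxDom n => auxb n ((σ i : Fin n) + i) p.1 p.2 := by
    ext p; simp
  rw [this]
  exact (auxA n).prod_mem fun i _ => auxA_b n _

/-- Linear projection onto the symplectic Lie algebra (up to scaling). -/
noncomputable def auxPr (n : ℕ) (x : Matrix (Fin n ⊕ Fin n) (Fin n ⊕ Fin n) ℂ) :
    Matrix (Fin n ⊕ Fin n) (Fin n ⊕ Fin n) ℂ := x + symplJ n * xᵀ * symplJ n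

theorem auxPr_inSp (n : ℕ) (x : Matrix (Fin n ⊕ Fin n) (Fin n ⊕ Fin n) ℂ) : inSp n (auxPr n x) := by
  have h1 := aux_J_sq n
  have h2 := aux_J_tr n
  rw [inSp, auxPr, Matrix.transpose_add, Matrix.transpose_mul, Matrix.transpose_mul, h2,
    Matrix.transpose_transpose]
  have e1 : (-symplJ n) * (x * (-symplJ n)) * symplJ n = - (symplJ n * x) := by
    have : (-symplJ n) * (x * (-symplJ n)) * symplJ n = symplJ n * x * (symplJ n * symplJ n) := by
      noncomm_ring
    rw [this, h1]; noncomm_ring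
  have e2 : symplJ n * (symplJ n * xᵀ * symplJ n) = - (xᵀ * symplJ n) := by
    have : symplJ n * (symplJ n * xᵀ * symplJ n) = (symplJ n * symplJ n) * xᵀ * symplJ n := by
      noncomm_ring
    rw [this, h1]; noncomm_ring
  rw [add_mul, mul_add, e1, e2]
  abel

theorem auxPr_surj (n : ℕ) (x : Matrix (Fin n ⊕ Fin n) (Fin n ⊕ Fin n) ℂ) (hx : inSp n x) :
    auxPr n ((1/2 : ℂ) • x) = x := by
  have h1 := aux_J_sq n
  have h3 : symplJ n * xᵀ * symplJ n = x := by
    have : xᵀ * symplJ n = - (symplJ n * x) := eq_neg_of_add_eq_zero_left hx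
    rw [mul_assoc, this, mul_neg, ← mul_assoc, h1]; noncomm_ring
  rw [auxPr, Matrix.transpose_smul, mul_smul_comm, smul_mul_assoc, h3, ← add_smul]
  norm_num

theorem auxA_pr (n : ℕ) (F : AuxDom n → ℂ) (hF : F ∈ auxA n) :
    (fun p : AuxDom n => F (auxPr n p.1, p.2)) ∈ auxA n := by
  obtain ⟨q, rfl⟩ := hF
  induction q using MvPolynomial.induction_on with
  | C a =>
    convert auxA_const n a using 1
    ext p
    simp
  | add p q hp hq =>
    have := (auxA n).add_mem hp hq
    convert this using 1
    ext p
    simp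
  | mul_X p i hp =>
    have h1 : (fun p : AuxDom n => auxCoord n (auxPr n p.1, p.2) i) ∈ auxA n := by
      rcases i with ⟨i, j⟩ | i
      · simp only [auxCoord, Sum.elim_inl, auxPr, Matrix.add_apply, Matrix.mul_apply,
          Matrix.transpose_apply]
        exact (auxA n).add_mem (auxA_entry n i j) (auxA_sum n _ fun k => auxA_mul n _ _
          (auxA_sum n _ fun l => auxA_mul n _ _ (auxA_const n _) (auxA_entry n _ _)) (auxA_const n _))
      · exact auxA_vec n i
    have := (auxA n).mul_mem hp h1
    convert this using 1
    ext p
    simp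

theorem aux_domain (n : ℕ) (F G : AuxDom n → ℂ) (hF : F ∈ auxA n) (hG : G ∈ auxA n)
    (h : ∀ x, inSp n x → ∀ v, F (x, v) * G (x, v) = 0) (x₀ v₀) (hx₀ : inSp n x₀)
    (hG0 : G (x₀, v₀) ≠ 0) : ∀ x, inSp n x → ∀ v, F (x, v) = 0 := by
  obtain ⟨f, hf⟩ := (auxA_iff n _).1 (auxA_pr n F hF)
  obtain ⟨g, hg⟩ := (auxA_iff n _).1 (auxA_pr n G hG)
  have hfg : f * g = 0 := by
    apply MvPolynomial.funext
    intro c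
    have e : c = Sum.elim (fun ij : (Fin n ⊕ Fin n) × (Fin n ⊕ Fin n) =>
        (Matrix.of fun i j => c (Sum.inl (i, j))) ij.1 ij.2) (fun i => c (Sum.inr i)) := by
      ext i; rcases i with ⟨i, j⟩ | i <;> simp
    rw [map_mul, map_zero, e, ← hf, ← hg]
    exact h _ (auxPr_inSp n _) _
  have hg0 : g ≠ 0 := by
    rintro rfl
    have := hg ((1/2 : ℂ) • x₀) v₀
    simp only [auxPr_surj n x₀ hx₀, map_zero] at this
    exact hG0 this
  have hf0 : f = 0 := (mul_eq_zero.1 hfg).resolve_right hg0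
  intro x hx v
  have := hf ((1/2 : ℂ) • x) v
  simpa only [auxPr_surj n x hx, hf0, map_zero] using this

theorem aux_clear {σ τ : Type} (num : σ → MvPolynomial τ ℂ) (den : MvPolynomial τ ℂ)
    (q : MvPolynomial σ ℂ) : ∃ (k : ℕ) (P : MvPolynomial τ ℂ), ∀ y, eval y den ≠ 0 →
      eval (fun i => eval y (num i) / eval y den) q * (eval y den) ^ k = eval y P := by
  induction q using MvPolynomial.induction_on with
  | C a => exact ⟨0, C a, fun y _ => by simp⟩
  | add p q hp hq =>
    obtain ⟨k, P, hP⟩ := hp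
    obtain ⟨l, R, hR⟩ := hq
    refine ⟨k + l, P * den ^ l + R * den ^ k, fun y hy => ?_⟩
    rw [map_add, map_add, map_mul, map_mul, ← hP y hy, ← hR y hy, map_pow, map_pow]
    ring
  | mul_X p i hp =>
    obtain ⟨k, P, hP⟩ := hp
    refine ⟨k + 1, P * num i, fun y hy => ?_⟩
    rw [map_mul, map_mul, ← hP y hy, eval_X]
    field_simp
    ring

theorem aux_dvd {σ : Type} [Finite σ] (l P : MvPolynomial σ ℂ) (hl : Prime l)
    (h : ∀ y, eval y l = 0 → eval y P = 0) : l ∣ P := by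
  have hp : (Ideal.span {l}).IsPrime := (Ideal.span_singleton_prime hl.ne_zero).2 hl
  have h1 := MvPolynomial.IsPrime.vanishingIdeal_zeroLocus (K := ℂ) (Ideal.span {l})
  rw [← Ideal.mem_span_singleton, ← h1, MvPolynomial.mem_vanishingIdeal_iff]
  intro y hy
  rw [MvPolynomial.zeroLocus_span] at hy
  have := hy l rfl
  rw [MvPolynomial.aeval_eq_eval] at this ⊢
  exact h y this

theorem aux_desc (m : ℕ) (F : AuxDom (m+1) → ℂ) (hF : F ∈ auxA (m+1))
    (q : MvPolynomial (Fin (m+1) ⊕ Fin (m+1)) ℂ) (hq : q ≠ 0) :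
    ∀ P : MvPolynomial (Fin (m+1) ⊕ Fin (m+1)) ℂ,
      (∀ x, inSp (m+1) x → ∀ v, F (x, v) * eval (fun i => spGen (m+1) i (x, v)) q =
        eval (fun i => spGen (m+1) i (x, v)) P) →
    ∃ p : MvPolynomial (Fin (m+1) ⊕ Fin (m+1)) ℂ, ∀ x, inSp (m+1) x → ∀ v,
      F (x, v) = eval (fun i => spGen (m+1) i (x, v)) p := by
  induction q using UniqueFactorizationMonoid.induction_on_prime with
  | h₁ => exact absurd rfl hq
  | h₂ u hu =>
    intro P hP
    obtain ⟨w, hw⟩ := hu.exists_right_inv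
    refine ⟨P * w, fun x hx v => ?_⟩
    rw [map_mul, ← hP x hx v, mul_assoc, ← map_mul, hw, map_one, mul_one]
  | h₃ a l ha hl ih =>
    intro P hP
    obtain ⟨R, rfl⟩ := aux_dvd l P hl (by
      intro y hy
      obtain ⟨x, hx, v, rfl⟩ := aux_surj m y
      rw [← hP x hx v, map_mul, hy, zero_mul, mul_zero])
    obtain ⟨y, hy⟩ : ∃ y, eval y l ≠ 0 := by
      by_contra! hcon
      exact hl.ne_zero (MvPolynomial.funext fun y => by rw [hcon, map_zero])
    obtain ⟨x₀, hx₀, v₀, hy₀⟩ := aux_surj m y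
    refine ih ha R fun x hx v => ?_
    rw [← sub_eq_zero]
    refine aux_domain (m+1) (fun p => F p * eval (fun i => spGen (m+1) i p) a -
      eval (fun i => spGen (m+1) i p) R) (fun p => eval (fun i => spGen (m+1) i p) l)
      ((auxA _).sub_mem (auxA_mul _ _ _ hF (auxA_eval _ a)) (auxA_eval _ R)) (auxA_eval _ l)
      ?_ x₀ v₀ hx₀ ?_ x hx v
    · intro x hx v
      have := hP x hx v
      rw [map_mul, map_mul] at this
      linear_combination this
    · simp only [hy₀]; exact hy

theorem aux_sect (m n : ℕ) (hnm : n = m + 1) (F : AuxDom n → ℂ) (hF : F ∈ auxA n)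
    (hinv : ∀ g, inSpGroup n g → IsUnit g → ∀ x, inSp n x → ∀ v,
        F (g * x * g⁻¹, g *ᵥ v) = F (x, v)) :
    ∃ p : MvPolynomial (Fin n ⊕ Fin n) ℂ, ∀ x, inSp n x → ∀ v,
      F (x, v) = eval (fun i => spGen n i (x, v)) p := by
  have hbase := aux_base m
  have hdesc := aux_desc m
  rw [← hnm] at hbase hdesc
  set Bp : Matrix (Fin n) (Fin n) (MvPolynomial (Fin n ⊕ Fin n) ℂ) :=
    Matrix.of fun i j => auxBP n (i + j) with hBp
  set Bp' : Matrix (Fin n) (Fin n) (MvPolynomial (Fin n ⊕ Fin n) ℂ) :=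
    Matrix.of fun i j => auxBP n (i + j + 1) with hBp'
  obtain ⟨q, hq⟩ := (auxA_iff n F).1 hF
  set num : ((Fin n ⊕ Fin n) × (Fin n ⊕ Fin n)) ⊕ (Fin n ⊕ Fin n) → MvPolynomial (Fin n ⊕ Fin n) ℂ :=
    Sum.elim (fun ij => (Matrix.fromBlocks 0 (Bp.adjugate * Bp' * Bp.adjugate) (Bp.det ^ 2 • Bp) 0) ij.1 ij.2)
      (fun i => Bp.det ^ 2 * C (Sum.elim (auxE n 0) 0 i)) with hnum
  obtain ⟨k, P, hP⟩ := aux_clear num (Bp.det ^ 2) q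
  obtain ⟨x₀, hx₀, -, v₀, hdet₀⟩ := hbase 0
  have hmap : ∀ x, inSp n x → ∀ v, (Matrix.of fun i j : Fin n => auxb n (i + j) x v).det ≠ 0 →
      Bp.map (eval (fun i => spGen n i (x, v))) = Matrix.of fun i j : Fin n => auxb n (i + j) x v := by
    intro x hx v hd
    ext i j
    exact auxBP_eval n (by omega) x hx v hd _
  have hmap' : ∀ x, inSp n x → ∀ v, (Matrix.of fun i j : Fin n => auxb n (i + j) x v).det ≠ 0 →
      Bp'.map (eval (fun i => spGen n i (x, v))) =
        Matrix.of fun i j : Fin n => auxb n (i + j + 1) x v := by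
    intro x hx v hd
    ext i j
    exact auxBP_eval n (by omega) x hx v hd _
  have hdm : ∀ x, inSp n x → ∀ v, (Matrix.of fun i j : Fin n => auxb n (i + j) x v).det ≠ 0 →
      eval (fun i => spGen n i (x, v)) Bp.det = (Matrix.of fun i j : Fin n => auxb n (i + j) x v).det := by
    intro x hx v hd
    rw [← hmap x hx v hd, RingHom.map_det]; rfl
  have hD0 : Bp.det ≠ 0 := by
    intro h0
    have := hdm x₀ hx₀ v₀ hdet₀
    rw [h0, map_zero] at this
    exact hdet₀ this.symm
  have hgen : ∀ x, inSp n x → ∀ v, (Matrix.of fun i j : Fin n => auxb n (i + j) x v).det ≠ 0 →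
      F (x, v) * eval (fun i => spGen n i (x, v)) ((Bp.det ^ 2) ^ k) =
        eval (fun i => spGen n i (x, v)) P := by
    intro x hx v hd
    have e1 := hmap x hx v hd
    have e2 := hmap' x hx v hd
    have e3 := hdm x hx v hd
    set B := Matrix.of fun i j : Fin n => auxb n (i + j) x v with hB
    set B' := Matrix.of fun i j : Fin n => auxb n (i + j + 1) x v with hB'
    set y := fun i => spGen n i (x, v) with hy
    have hy0 : eval y (Bp.det ^ 2) ≠ 0 := by rw [map_pow, e3]; exact pow_ne_zero _ hd
    obtain ⟨g, hs, hg, hxg, hvg⟩ :=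
      aux_conj n (by omega) x hx v B B' (fun i j => rfl) (fun i j => rfl) hd
    have hsB : Bᵀ = B := by
      ext i j; simp only [hB, Matrix.transpose_apply, Matrix.of_apply, add_comm (i : ℕ) (j : ℕ)]
    have hsB' : B'ᵀ = B' := by
      ext i j; simp only [hB', Matrix.transpose_apply, Matrix.of_apply, add_comm (i : ℕ) (j : ℕ)]
    have hBi : (B⁻¹)ᵀ = B⁻¹ := by rw [Matrix.transpose_nonsing_inv, hsB]
    have hQs : (B⁻¹ * B' * B⁻¹)ᵀ = B⁻¹ * B' * B⁻¹ := by
      rw [Matrix.transpose_mul, Matrix.transpose_mul, hBi, hsB', mul_assoc]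
    have hF1 : F (x, v) = F (Matrix.fromBlocks 0 (B⁻¹ * B' * B⁻¹) B 0, Sum.elim (auxE n 0) 0) := by
      rw [← hinv g hs hg _ (auxY_inSp _ _ _ hQs hsB), ← hxg, ← hvg]
    rw [← hP y hy0, hF1, hq, map_pow]
    congr 2
    congr 1
    have hadj : (Bp.adjugate * Bp' * Bp.adjugate).map (eval y) = B.adjugate * B' * B.adjugate := by
      have := RingHom.map_adjugate (eval y) Bp
      rw [RingHom.mapMatrix_apply, RingHom.mapMatrix_apply, e1] at this
      rw [Matrix.map_mul, Matrix.map_mul, this, e2]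
    have hinvB : B⁻¹ * B' * B⁻¹ = (1 / B.det ^ 2) • (B.adjugate * B' * B.adjugate) := by
      rw [Matrix.inv_def, Ring.inverse_eq_inv', smul_mul_assoc, smul_mul_assoc, mul_smul_comm, smul_smul]
      congr 1
      field_simp
    have hd2 : B.det ^ 2 ≠ 0 := pow_ne_zero _ hd
    funext i
    rw [map_pow, e3]
    rcases i with ⟨i | i, j | j⟩ | i
    · simp [hnum]
    · have := congrFun (congrFun hadj i) j
      rw [Matrix.map_apply] at this
      simp only [hnum, Sum.elim_inl, Matrix.fromBlocks_apply₁₂, this, hinvB, Matrix.smul_apply, smul_eq_mul]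
      ring
    · have := congrFun (congrFun e1 i) j
      rw [Matrix.map_apply] at this
      simp only [hnum, Sum.elim_inl, Matrix.fromBlocks_apply₂₁, Matrix.smul_apply, smul_eq_mul, map_mul,
        map_pow, e3, this]
      field_simp
    · simp [hnum]
    · simp only [hnum, Sum.elim_inr, map_mul, map_pow, e3, eval_C]
      field_simp
  refine hdesc F hF ((Bp.det ^ 2) ^ k) (pow_ne_zero _ (pow_ne_zero _ hD0)) P fun x hx v => ?_
  rw [← sub_eq_zero]
  refine aux_domain n (fun p => F p * eval (fun i => spGen n i p) ((Bp.det ^ 2) ^ k) -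
      eval (fun i => spGen n i p) P)
      (fun p => (Matrix.of fun i j : Fin n => auxb n (i + j) p.1 p.2).det)
      ((auxA _).sub_mem (auxA_mul _ _ _ hF (auxA_eval _ _)) (auxA_eval _ P)) (auxA_det n)
      ?_ x₀ v₀ hx₀ hdet₀ x hx v
  intro x hx v
  by_cases hd : (Matrix.of fun i j : Fin n => auxb n (i + j) x v).det = 0
  · simp only [hd, mul_zero]
  · simp only [hgen x hx v hd, sub_self, zero_mul]

end Final

/-- The algebra of `Sp(2n,ℂ)`-invariant polynomial functions on
`𝔰𝔭(2n) ⊕ ℂ^{2n}` is a polynomial algebra freely generated by the `2n` functions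
`Tr(x²), Tr(x⁴), …, Tr(x^{2n})`, `⟨v,xv⟩, ⟨v,x³v⟩, …, ⟨v,x^{2n−1}v⟩`:
the generators are invariant, the evaluation map from abstract polynomials in `2n`
variables is injective (free generation) and hits every invariant polynomial function. -/
theorem sp_invariants_of_sp_plus_vector (n : ℕ) :
    (∀ i : Fin n ⊕ Fin n, ∀ g, inSpGroup n g → IsUnit g →
      ∀ x, inSp n x → ∀ v, spGen n i (g * x * g⁻¹, g *ᵥ v) = spGen n i (x, v)) ∧
    (∀ p : MvPolynomial (Fin n ⊕ Fin n) ℂ,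
      (∀ x, inSp n x → ∀ v,
        MvPolynomial.eval (fun i => spGen n i (x, v)) p = 0) → p = 0) ∧
    (∀ F, IsPolyFn n F →
      (∀ g, inSpGroup n g → IsUnit g → ∀ x, inSp n x → ∀ v,
        F (g * x * g⁻¹, g *ᵥ v) = F (x, v)) →
      ∃ p : MvPolynomial (Fin n ⊕ Fin n) ℂ,
        ∀ x, inSp n x → ∀ v,
          F (x, v) = MvPolynomial.eval (fun i => spGen n i (x, v)) p) := by
  refine ⟨fun i g hs hg x _ v => auxGen_inv n i g x hs hg v, ?_, ?_⟩
  · intro p hp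
    cases n with
    | zero =>
      refine MvPolynomial.funext fun y => ?_
      rw [Subsingleton.elim y (fun i => spGen 0 i (0, 0)), hp 0 (by simp [inSp]), map_zero]
    | succ m =>
      refine MvPolynomial.funext fun y => ?_
      obtain ⟨x, hx, v, rfl⟩ := aux_surj m y
      rw [hp x hx v, map_zero]
  · intro F hF hinv
    cases n with
    | zero =>
      refine ⟨MvPolynomial.C (F (0, 0)), fun x _ v => ?_⟩
      rw [MvPolynomial.eval_C, Subsingleton.elim x 0, Subsingleton.elim v 0]
    | succ m => exact aux_sect m (m + 1) rfl F ((auxA_iff _ F).2 hF) hinv
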